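/- For every integer n ≥ 2 there exists a constant C = C(n) > 0 with the following property: for every R > 0 and every λ₁ ∈ ℝ such that (a) λ₁ admits a nonzero function u, continuously differentiable on [0,R] and twice differentiable on (0,R), with u(0) = u(R) = 0 and −u'' + V₁·u = λ₁·u on (0,R), and (b) λ₁ is minimal with this property (every μ admitting such a nonzero solution satisfies μ ≥ λ₁), one has: for v(t) = sin(πt/R), (∫₀ᴿ (v'² + V₂·v²) dt)/(∫₀ᴿ v² dt) ≤ λ₁ + C/R³. In particular the fundamental gap λ₂(B_R) − λ₁(B_R) of geodesic balls B_R ⊂ ℍⁿ is at most C(n)/R³, so (λ₂ − λ₁)·R² → 0 as R → ∞. -/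

import Mathlib

/-- `lam` is a Dirichlet eigenvalue of the Schrödinger operator `-d²/dt² + V` on `[0, R]`. -/
def IsDirichletEigenvalue (V : ℝ → ℝ) (R lam : ℝ) : Prop :=
  ∃ u : ℝ → ℝ,
    (∃ t ∈ Set.Icc (0:ℝ) R, u t ≠ 0) ∧
    ContinuousOn u (Set.Icc 0 R) ∧
    (∀ t ∈ Set.Ioo (0:ℝ) R, DifferentiableAt ℝ u t) ∧
    ContinuousOn (deriv u) (Set.Icc 0 R) ∧
    (∀ t ∈ Set.Ioo (0:ℝ) R, DifferentiableAt ℝ (deriv u) t) ∧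
    u 0 = 0 ∧ u R = 0 ∧
    (∀ t ∈ Set.Ioo (0:ℝ) R, -(deriv (deriv u) t) + V t * u t = lam * u t)

/-- The Rayleigh quotient `R_V[u] = (∫₀ᴿ (u'² + V u²))/(∫₀ᴿ u²)` on `[0, R]`. -/
noncomputable def Rayleigh (V u : ℝ → ℝ) (R : ℝ) : ℝ :=
  (∫ t in (0:ℝ)..R, (deriv u t) ^ 2 + V t * (u t) ^ 2) / (∫ t in (0:ℝ)..R, (u t) ^ 2)

/-- The potential `V₁(t) = ((n−1)/4)·(n−1 + (n−3)/sinh² t)`. -/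
noncomputable def V1 (n : ℕ) (t : ℝ) : ℝ :=
  ((n : ℝ) - 1) / 4 * (((n : ℝ) - 1) + ((n : ℝ) - 3) / (Real.sinh t) ^ 2)

/-- The potential `V₂(t) = ((n−1)/4)·(n−1 + (n+1)/sinh² t)`. -/
noncomputable def V2 (n : ℕ) (t : ℝ) : ℝ :=
  ((n : ℝ) - 1) / 4 * (((n : ℝ) - 1) + ((n : ℝ) + 1) / (Real.sinh t) ^ 2)

lemma aux_picone (V : ℝ → ℝ) (R lam A : ℝ) (hR : 0 < R) (hV : ∀ t ∈ Set.Ioo (0:ℝ) R, A ≤ V t)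
    (h : IsDirichletEigenvalue V R lam) : A + (Real.pi / R) ^ 2 ≤ lam := by
  obtain ⟨u, ⟨t0, ht0, hne⟩, hc, hd, hc', hd', h0, hR0, heq⟩ := h
  by_contra hlt
  push Not at hlt
  obtain ⟨k, hk0, hkR, hk2⟩ : ∃ k : ℝ, 0 ≤ k ∧ k < Real.pi / R ∧ lam - A ≤ k ^ 2 := by
    have hpos : 0 < Real.pi / R := div_pos Real.pi_pos hR
    refine ⟨Real.sqrt (max 0 (lam - A)), Real.sqrt_nonneg _, ?_, ?_⟩
    · rw [Real.sqrt_lt' hpos]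
      exact max_lt (by positivity) (by linarith)
    · rw [Real.sq_sqrt (le_max_left _ _)]
      exact le_max_right _ _
  have hkR' : k * R < Real.pi := by rwa [lt_div_iff₀ hR] at hkR
  set φ : ℝ → ℝ := fun t => Real.cos (k * (t - R / 2)) with hφ
  set ψ : ℝ → ℝ := fun t => -(k * Real.sin (k * (t - R / 2))) with hψ
  have hφpos : ∀ t ∈ Set.Icc (0:ℝ) R, 0 < φ t := by
    intro t ht
    apply Real.cos_pos_of_mem_Ioo
    constructor <;> nlinarith [ht.1, ht.2]
  have hφd : ∀ t, HasDerivAt φ (ψ t) t := by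
    intro t
    have h1 : HasDerivAt (fun t : ℝ => k * (t - R / 2)) (k * 1) t :=
      ((hasDerivAt_id t).sub_const _).const_mul k
    refine h1.cos.congr_deriv ?_
    simp only [hψ]; ring
  have hψd : ∀ t, HasDerivAt ψ (-(k ^ 2 * φ t)) t := by
    intro t
    have h1 : HasDerivAt (fun t : ℝ => k * (t - R / 2)) (k * 1) t :=
      ((hasDerivAt_id t).sub_const _).const_mul k
    refine (h1.sin.const_mul k).neg.congr_deriv ?_
    simp only [hφ]; ring
  have hφc : Continuous φ := by simp only [hφ]; fun_prop
  have hψc : Continuous ψ := by simp only [hψ]; fun_prop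
  set F : ℝ → ℝ := fun t => u t * deriv u t - (u t) ^ 2 * (ψ t / φ t) with hF
  have hFc : ContinuousOn F (Set.Icc 0 R) :=
    (hc.mul hc').sub ((hc.pow 2).mul (hψc.continuousOn.div hφc.continuousOn
      (fun t ht => (hφpos t ht).ne')))
  have hFd : ∀ t ∈ Set.Ioo (0:ℝ) R, HasDerivAt F
      ((deriv u t - u t * (ψ t / φ t)) ^ 2 + (u t) ^ 2 * (V t - lam + k ^ 2)) t := by
    intro t ht
    have hp := (hφpos t ⟨ht.1.le, ht.2.le⟩).ne'
    have e := heq t ht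
    have e2 : deriv (deriv u) t = (V t - lam) * u t := by linarith
    have h1 := (hd t ht).hasDerivAt
    have h2 := (hd' t ht).hasDerivAt
    rw [e2] at h2
    refine ((h1.mul h2).sub ((h1.pow 2).mul ((hψd t).div (hφd t) hp))).congr_deriv ?_
    simp
    field_simp
    ring
  have hFnn : ∀ t ∈ Set.Ioo (0:ℝ) R, 0 ≤ (u t) ^ 2 * (V t - lam + k ^ 2) := by
    intro t ht
    have := hV t ht
    exact mul_nonneg (sq_nonneg _) (by linarith)
  have hmono : MonotoneOn F (Set.Icc 0 R) := by
    apply monotoneOn_of_deriv_nonneg (convex_Icc 0 R) hFc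
    · rw [interior_Icc]
      exact fun t ht => (hFd t ht).differentiableAt.differentiableWithinAt
    · rw [interior_Icc]
      intro t ht
      rw [(hFd t ht).deriv]
      have := hFnn t ht
      positivity
  have hF0 : F 0 = 0 := by simp [hF, h0]
  have hFR : F R = 0 := by simp [hF, hR0]
  have hFz : ∀ t ∈ Set.Icc (0:ℝ) R, F t = 0 := by
    intro t ht
    have a := hmono ⟨le_rfl, hR.le⟩ ht ht.1
    have b := hmono ht ⟨hR.le, le_rfl⟩ ht.2
    linarith
  have hu' : ∀ t ∈ Set.Ioo (0:ℝ) R, deriv u t = u t * (ψ t / φ t) := by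
    intro t ht
    have h1 : F =ᶠ[nhds t] fun _ => 0 := by
      filter_upwards [Ioo_mem_nhds ht.1 ht.2] with s hs
      exact hFz s ⟨hs.1.le, hs.2.le⟩
    have h2 := (hFd t ht).deriv
    rw [h1.deriv_eq, deriv_const] at h2
    have h3 := hFnn t ht
    have h4 : (deriv u t - u t * (ψ t / φ t)) ^ 2 = 0 := by
      have := sq_nonneg (deriv u t - u t * (ψ t / φ t))
      linarith
    have := pow_eq_zero_iff (two_ne_zero) |>.1 h4
    linarith
  set G : ℝ → ℝ := fun t => u t / φ t with hG
  have hGc : ContinuousOn G (Set.Icc 0 R) := hc.div hφc.continuousOn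
      (fun t ht => (hφpos t ht).ne')
  have hGd : ∀ t ∈ Set.Ioo (0:ℝ) R, HasDerivAt G 0 t := by
    intro t ht
    have hp := (hφpos t ⟨ht.1.le, ht.2.le⟩).ne'
    have h1 := (hd t ht).hasDerivAt
    rw [hu' t ht] at h1
    refine (h1.div (hφd t) hp).congr_deriv ?_
    field_simp
    ring
  have hGconst : G t0 = G 0 := by
    apply constant_of_has_deriv_right_zero (f := fun t => G t) (a := 0) (b := R) hGc ?_ t0 ht0 |>.trans rfl
    intro x hx
    rcases eq_or_lt_of_le hx.1 with h | h
    · subst h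
      refine hasDerivWithinAt_Ici_of_tendsto_deriv (s := Set.Ioo 0 R) ?_ ?_ ?_ ?_
      · exact fun t ht => (hGd t ht).differentiableAt.differentiableWithinAt
      · exact (hGc 0 ⟨le_rfl, hR.le⟩).mono Set.Ioo_subset_Icc_self
      · exact Ioo_mem_nhdsGT hR
      · apply tendsto_const_nhds.congr'
        filter_upwards [Ioo_mem_nhdsGT hR] with t ht
        exact (hGd t ht).deriv.symm
    · exact (hGd x ⟨h, hx.2⟩).hasDerivWithinAt
  have : G 0 = 0 := by simp [hG, h0]
  rw [this] at hGconst
  simp only [hG] at hGconst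
  rcases div_eq_zero_iff.1 hGconst with h | h
  · exact hne h
  · exact (hφpos t0 ht0).ne' h

lemma aux_sinh_le (t : ℝ) (ht : 0 < t) :
    0 ≤ 1 / t ^ 2 - 1 / (Real.sinh t) ^ 2 ∧ 1 / t ^ 2 - 1 / (Real.sinh t) ^ 2 ≤ 1 := by
  have hs : t < Real.sinh t := Real.self_lt_sinh_iff.2 ht
  have hs0 : 0 < Real.sinh t := ht.trans hs
  constructor
  · have : 1 / (Real.sinh t) ^ 2 ≤ 1 / t ^ 2 := by gcongr
    linarith
  · have hmono : MonotoneOn (fun t => t * Real.cosh t - Real.sinh t) (Set.Ici 0) := by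
      have hd : ∀ x : ℝ, HasDerivAt (fun t => t * Real.cosh t - Real.sinh t) (x * Real.sinh x) x := by
        intro x
        refine (((hasDerivAt_id x).mul (Real.hasDerivAt_cosh x)).sub (Real.hasDerivAt_sinh x)).congr_deriv ?_
        simp
      apply monotoneOn_of_deriv_nonneg (convex_Ici 0)
      · exact fun x _ => (hd x).continuousAt.continuousWithinAt
      · exact fun x _ => (hd x).differentiableAt.differentiableWithinAt
      · intro x hx
        rw [interior_Ici] at hx
        rw [(hd x).deriv]
        have hx' : 0 < x := hx
        exact mul_nonneg hx'.le (Real.sinh_nonneg_iff.2 hx'.le)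
    have h1 := hmono (Set.mem_Ici.2 le_rfl) (Set.mem_Ici.2 ht.le) ht.le
    simp at h1
    have h2 : Real.sinh t ^ 2 ≤ t ^ 2 * (1 + Real.sinh t ^ 2) := by
      have := Real.cosh_sq t
      have h3 : Real.sinh t ^ 2 ≤ (t * Real.cosh t) ^ 2 := by gcongr
      rw [mul_pow, this] at h3
      linarith
    rw [div_sub_div _ _ (by positivity) (by positivity), div_le_one (by positivity)]
    nlinarith

lemma aux_two (R lam : ℝ) (hR : 0 < R) : ¬ IsDirichletEigenvalue (V1 2) R lam := by
  rintro ⟨u, ⟨t0, ht0, hne⟩, hc, hd, hc', hd', h0, hR0, heq⟩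
  obtain ⟨M, hM⟩ := isCompact_Icc.exists_bound_of_continuousOn hc'
  have hM0 : 0 ≤ M := (norm_nonneg _).trans (hM 0 ⟨le_rfl, hR.le⟩)
  have hub : ∀ t ∈ Set.Ioo (0:ℝ) R, |u t| ≤ M * t := by
    intro t ht
    obtain ⟨c, hcm, hce⟩ := exists_deriv_eq_slope u ht.1
      (hc.mono (Set.Icc_subset_Icc_right ht.2.le))
      (fun x hx => (hd x ⟨hx.1, hx.2.trans ht.2⟩).differentiableWithinAt)
    have := hM c ⟨hcm.1.le, (hcm.2.trans ht.2).le⟩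
    rw [hce, h0, Real.norm_eq_abs, sub_zero, sub_zero, abs_div, abs_of_pos ht.1,
      div_le_iff₀ ht.1] at this
    exact this
  set C : ℝ := 1 / 4 + |1 / 4 - lam| with hC
  set hh : ℝ → ℝ := fun t => 1 / 4 * (1 / t ^ 2 - 1 / (Real.sinh t) ^ 2) + (1 / 4 - lam) with hhh
  have hhC : ∀ t : ℝ, 0 < t → |hh t| ≤ C := by
    intro t ht
    obtain ⟨a, b⟩ := aux_sinh_le t ht
    refine (abs_add_le _ _).trans ?_
    rw [abs_of_nonneg (by linarith)]
    linarith
  have hu2 : ∀ t ∈ Set.Ioo (0:ℝ) R, deriv (deriv u) t = -(u t / (4 * t ^ 2)) + hh t * u t := by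
    intro t ht
    have e := heq t ht
    have : V1 2 t = 1 / 4 - 1 / 4 * (1 / Real.sinh t ^ 2) := by
      simp only [V1]; push_cast; ring
    rw [this] at e
    have h3 : u t / (4 * t ^ 2) = 1 / 4 * (1 / t ^ 2) * u t := by
      have := ht.1.ne'
      field_simp
    rw [h3]
    simp only [hhh]
    linarith
  set E : ℝ → ℝ := fun t => t * (deriv u t - u t / (2 * t)) ^ 2 + (u t) ^ 2 / (16 * t) with hE
  have hE0 : ∀ t ∈ Set.Ioo (0:ℝ) R, 0 ≤ E t := by
    intro t ht
    have := ht.1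
    positivity
  have hEd : ∀ t ∈ Set.Ioo (0:ℝ) R, ∃ e, HasDerivAt E e t ∧ t * e ≤ (1 / 4 + 4 * C * t ^ 2) * E t := by
    intro t ht
    have hp := ht.1
    have hp' := hp.ne'
    have h1 := (hd t ht).hasDerivAt
    have h2 := (hd' t ht).hasDerivAt
    rw [hu2 t ht] at h2
    have hid := hasDerivAt_id t
    refine ⟨_, (hid.mul ((h2.sub (h1.div (hid.const_mul 2) (by simpa using hp'))).pow 2)).add
      ((h1.pow 2).div (hid.const_mul 16) (by simpa using hp')), ?_⟩
    have hb := hhC t hp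
    have key : ∀ p v g : ℝ, |g| ≤ C →
        2 * (g * t ^ 2) * ((p - v / (2 * t)) * v) + 1 / 8 * ((p - v / (2 * t)) * v)
          ≤ (1 / 4 + 4 * C * t ^ 2) * (t * (p - v / (2 * t)) ^ 2 + v ^ 2 / (16 * t)) := by
      intro p v g hg
      set x := p - v / (2 * t)
      have hx : |x * v| ≤ 2 * (t * x ^ 2 + v ^ 2 / (16 * t)) := by
        have e1 : 2 * (t * x ^ 2 + v ^ 2 / (16 * t)) = (16 * t ^ 2 * x ^ 2 + v ^ 2) / (8 * t) := by
          field_simp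
          ring
        rw [e1, le_div_iff₀ (by positivity), abs_mul, ← sq_abs x, ← sq_abs v]
        nlinarith [sq_nonneg (4 * t * |x| - |v|)]
      have hm : 2 * (g * t ^ 2) * (x * v) + 1 / 8 * (x * v) ≤
          (2 * C * t ^ 2 + 1 / 8) * |x * v| := by
        have : 2 * (g * t ^ 2) * (x * v) + 1 / 8 * (x * v) ≤ |2 * (g * t ^ 2) + 1 / 8| * |x * v| := by
          rw [← abs_mul]
          refine le_trans (le_of_eq (by ring)) (le_abs_self _)
        refine this.trans ?_
        gcongr
        refine (abs_add_le _ _).trans ?_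
        rw [abs_mul, abs_mul, abs_of_nonneg (sq_nonneg t)]
        norm_num
        nlinarith [sq_nonneg t]
      have hC0 : 0 ≤ C := (abs_nonneg _).trans hg
      refine hm.trans ?_
      have : (2 * C * t ^ 2 + 1 / 8) * |x * v| ≤
        (2 * C * t ^ 2 + 1 / 8) * (2 * (t * x ^ 2 + v ^ 2 / (16 * t))) := by gcongr
      refine this.trans (le_of_eq (by ring))
    refine le_trans (le_of_eq ?_) (key (deriv u t) (u t) (hh t) hb)
    simp
    field_simp
    ring
  set H : ℝ → ℝ := fun t => (E t) ^ 2 * Real.exp (-(4 * C * t ^ 2)) / t with hH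
  have hHd : ∀ t ∈ Set.Ioo (0:ℝ) R, ∃ e, HasDerivAt H e t ∧ e ≤ 0 := by
    intro t ht
    have hp := ht.1
    have hp' := hp.ne'
    obtain ⟨e, he, hle⟩ := hEd t ht
    have hid := hasDerivAt_id t
    have hex : HasDerivAt (fun t : ℝ => Real.exp (-(4 * C * t ^ 2)))
        (Real.exp (-(4 * C * t ^ 2)) * -(4 * C * (2 * t))) t := by
      have := (((hid.pow 2).const_mul (4 * C)).neg).exp
      simpa using this
    refine ⟨_, ((he.pow 2).mul hex).div hid hp', ?_⟩
    apply div_nonpos_of_nonpos_of_nonneg _ (sq_nonneg _)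
    simp
    have hx := Real.exp_pos (-(4 * C * t ^ 2))
    set X := Real.exp (-(4 * C * t ^ 2))
    have hEt := hE0 t ht
    have h5 : E t * (t * e) ≤ E t * ((1 / 4 + 4 * C * t ^ 2) * E t) := by gcongr
    have h6 : X * (E t * (t * e)) ≤ X * (E t * ((1 / 4 + 4 * C * t ^ 2) * E t)) := by gcongr
    have h7 : 0 ≤ X * E t ^ 2 := by positivity
    nlinarith
  have hanti : AntitoneOn H (Set.Ioo 0 R) := by
    apply antitoneOn_of_deriv_nonpos (convex_Ioo 0 R)
    · intro t ht
      obtain ⟨e, he, _⟩ := hHd t ht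
      exact he.continuousAt.continuousWithinAt
    · rw [interior_Ioo]
      intro t ht
      obtain ⟨e, he, _⟩ := hHd t ht
      exact he.differentiableAt.differentiableWithinAt
    · rw [interior_Ioo]
      intro t ht
      obtain ⟨e, he, hl⟩ := hHd t ht
      rw [he.deriv]; exact hl
  have hC0 : 0 ≤ C := by positivity
  have hHb : ∀ t ∈ Set.Ioo (0:ℝ) R, H t ≤ (4 * M ^ 2) ^ 2 * t := by
    intro t ht
    have hp := ht.1
    have hp' := hp.ne'
    have h1 := hub t ht
    have h2 : |deriv u t| ≤ M := hM t ⟨ht.1.le, ht.2.le⟩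
    have h3 : |u t / t| ≤ M := by
      rw [abs_div, abs_of_pos hp, div_le_iff₀ hp]; exact h1
    have hEt : E t ≤ 4 * M ^ 2 * t := by
      have e1 : E t = t * ((deriv u t - (u t / t) / 2) ^ 2 + (u t / t) ^ 2 / 16) := by
        simp only [hE]
        field_simp
      rw [e1, mul_comm]
      gcongr
      have a := sq_le_sq' (abs_le.1 h2).1 (abs_le.1 h2).2
      have b := sq_le_sq' (abs_le.1 h3).1 (abs_le.1 h3).2
      nlinarith [sq_nonneg (deriv u t + (u t / t) / 2)]
    have hEt0 := hE0 t ht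
    simp only [hH]
    rw [div_le_iff₀ hp]
    have hx : Real.exp (-(4 * C * t ^ 2)) ≤ 1 := by
      apply Real.exp_le_one_iff.2
      have : 0 ≤ 4 * C * t ^ 2 := by positivity
      linarith
    calc E t ^ 2 * Real.exp (-(4 * C * t ^ 2)) ≤ (4 * M ^ 2 * t) ^ 2 * 1 := by gcongr
      _ = _ := by ring
  have hz : ∀ t ∈ Set.Ioo (0:ℝ) R, u t = 0 := by
    intro t ht
    have hp := ht.1
    have hHt : H t ≤ 0 := by
      have hlim : Filter.Tendsto (fun s : ℝ => (4 * M ^ 2) ^ 2 * s) (nhdsWithin 0 (Set.Ioi 0))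
          (nhds 0) := by
        have : Filter.Tendsto (fun s : ℝ => (4 * M ^ 2) ^ 2 * s) (nhds 0)
          (nhds ((4 * M ^ 2) ^ 2 * 0)) := (continuous_const.mul continuous_id).tendsto 0
        rw [mul_zero] at this
        exact this.mono_left nhdsWithin_le_nhds
      apply ge_of_tendsto hlim
      filter_upwards [Ioo_mem_nhdsGT hp] with s hs
      have hs' : s ∈ Set.Ioo (0:ℝ) R := ⟨hs.1, hs.2.trans ht.2⟩
      exact (hanti hs' ht hs.2.le).trans (hHb s hs')
    by_contra hut
    have hEp : 0 < E t := by
      have : 0 < (u t) ^ 2 / (16 * t) := by positivity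
      have h' : 0 ≤ t * (deriv u t - u t / (2 * t)) ^ 2 := by positivity
      simp only [hE]; linarith
    have : 0 < H t := by simp only [hH]; positivity
    linarith
  rcases eq_or_lt_of_le ht0.1 with h | h
  · exact hne (h ▸ h0)
  rcases eq_or_lt_of_le ht0.2 with h' | h'
  · exact hne (h' ▸ hR0)
  · exact hne (hz t0 ⟨h, h'⟩)

lemma aux_sinh_sq (t : ℝ) (ht : 0 < t) : t ^ 2 * (1 + t ^ 2) ≤ 4 * Real.sinh t ^ 2 := by
  have h1 : Real.sinh t = 2 * Real.sinh (t / 2) * Real.cosh (t / 2) := by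
    rw [← Real.sinh_two_mul]; ring_nf
  have h2 := Real.cosh_sq (t / 2)
  have h3 : t / 2 ≤ Real.sinh (t / 2) := Real.self_le_sinh_iff.2 (by linarith)
  have h4 : (t / 2) ^ 2 ≤ Real.sinh (t / 2) ^ 2 := by gcongr
  rw [h1, mul_pow, mul_pow, h2]
  have h5 : (t / 2) ^ 2 * ((t / 2) ^ 2 + 1) ≤ Real.sinh (t / 2) ^ 2 * (Real.sinh (t / 2) ^ 2 + 1) := by
    gcongr
  nlinarith [sq_nonneg t]

lemma aux_ptwise (R t : ℝ) (hR : 0 < R) (ht : 0 ≤ t) :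
    Real.sin (Real.pi * t / R) ^ 2 / Real.sinh t ^ 2 ≤ 4 * (Real.pi / R) ^ 2 * (1 / (1 + t ^ 2)) := by
  rcases eq_or_lt_of_le ht with h | h
  · subst h; simp; positivity
  have hs : 0 < Real.sinh t := Real.sinh_pos_iff.2 h
  rw [div_le_iff₀ (by positivity)]
  have h1 : Real.sin (Real.pi * t / R) ^ 2 ≤ (Real.pi * t / R) ^ 2 :=
    sq_le_sq.2 (Real.abs_sin_le_abs)
  refine h1.trans ?_
  have h2 := aux_sinh_sq t h
  have h3 : t ^ 2 ≤ 4 * Real.sinh t ^ 2 / (1 + t ^ 2) := by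
    rwa [le_div_iff₀ (by positivity)]
  calc (Real.pi * t / R) ^ 2 = (Real.pi / R) ^ 2 * t ^ 2 := by ring
    _ ≤ (Real.pi / R) ^ 2 * (4 * Real.sinh t ^ 2 / (1 + t ^ 2)) := by gcongr
    _ = _ := by ring

lemma aux_bound_int (R : ℝ) :
    IntervalIntegrable (fun t : ℝ => 4 * (Real.pi / R) ^ 2 * (1 / (1 + t ^ 2))) MeasureTheory.volume 0 R := by
  apply Continuous.intervalIntegrable
  have : ∀ t : ℝ, 1 + t ^ 2 ≠ 0 := fun t => by positivity
  fun_prop (disch := assumption)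

lemma aux_int (R : ℝ) (hR : 0 < R) :
    IntervalIntegrable (fun t => Real.sin (Real.pi * t / R) ^ 2 / Real.sinh t ^ 2)
      MeasureTheory.volume 0 R := by
  apply (aux_bound_int R).mono_fun'
  · apply Measurable.aestronglyMeasurable
    apply Measurable.div <;> fun_prop
  · rw [Set.uIoc_of_le hR.le]
    refine (MeasureTheory.ae_restrict_iff' measurableSet_Ioc).2 (Filter.Eventually.of_forall ?_)
    intro t ht
    beta_reduce
    rw [Real.norm_of_nonneg (by positivity)]
    exact aux_ptwise R t hR ht.1.le

lemma aux_rayleigh (n : ℕ) (hn : 2 ≤ n) (R : ℝ) (hR : 0 < R) :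
    Rayleigh (V2 n) (fun t => Real.sin (Real.pi * t / R)) R ≤
      ((n : ℝ) - 1) ^ 2 / 4 + (Real.pi / R) ^ 2 + ((n : ℝ) ^ 2 - 1) * Real.pi ^ 3 / R ^ 3 := by
  have hn' : (2 : ℝ) ≤ n := by exact_mod_cast hn
  have hB : 0 ≤ ((n : ℝ) ^ 2 - 1) / 4 := by nlinarith
  have hpR : Real.pi / R ≠ 0 := (div_pos Real.pi_pos hR).ne'
  have hsin : ∫ t in (0:ℝ)..R, Real.sin (Real.pi * t / R) ^ 2 = R / 2 := by
    have e : ∀ t : ℝ, Real.pi * t / R = Real.pi / R * t := fun t => by ring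
    simp_rw [e]
    rw [intervalIntegral.integral_comp_mul_left (fun x => Real.sin x ^ 2) hpR,
      div_mul_cancel₀ _ hR.ne', integral_sin_sq]
    simp
    have := Real.pi_pos
    field_simp
  have hcos : ∫ t in (0:ℝ)..R, Real.cos (Real.pi * t / R) ^ 2 = R / 2 := by
    have e : ∀ t : ℝ, Real.pi * t / R = Real.pi / R * t := fun t => by ring
    simp_rw [e]
    rw [intervalIntegral.integral_comp_mul_left (fun x => Real.cos x ^ 2) hpR,
      div_mul_cancel₀ _ hR.ne', integral_cos_sq]
    simp
    have := Real.pi_pos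
    field_simp
  have hder : ∀ t, deriv (fun t => Real.sin (Real.pi * t / R)) t
      = Real.pi / R * Real.cos (Real.pi * t / R) := by
    intro t
    have h1 : HasDerivAt (fun t : ℝ => Real.pi * t / R) (Real.pi * 1 / R) t :=
      ((hasDerivAt_id t).const_mul _).div_const _
    rw [h1.sin.deriv]; ring
  have hI : ∫ t in (0:ℝ)..R, Real.sin (Real.pi * t / R) ^ 2 / Real.sinh t ^ 2
      ≤ 2 * Real.pi ^ 3 / R ^ 2 := by
    have h1 : ∫ t in (0:ℝ)..R, Real.sin (Real.pi * t / R) ^ 2 / Real.sinh t ^ 2 ≤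
        ∫ t in (0:ℝ)..R, 4 * (Real.pi / R) ^ 2 * (1 / (1 + t ^ 2)) :=
      intervalIntegral.integral_mono_on hR.le (aux_int R hR) (aux_bound_int R)
        (fun t ht => aux_ptwise R t hR ht.1)
    rw [intervalIntegral.integral_const_mul, integral_one_div_one_add_sq, Real.arctan_zero,
      sub_zero] at h1
    have h2 := (Real.arctan_lt_pi_div_two R).le
    calc _ ≤ _ := h1
      _ ≤ 4 * (Real.pi / R) ^ 2 * (Real.pi / 2) := by gcongr
      _ = _ := by ring
  have hnum : ∫ t in (0:ℝ)..R, (deriv (fun t => Real.sin (Real.pi * t / R)) t) ^ 2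
        + V2 n t * (Real.sin (Real.pi * t / R)) ^ 2
      = (Real.pi / R) ^ 2 * (R / 2) + ((n : ℝ) - 1) ^ 2 / 4 * (R / 2)
        + ((n : ℝ) ^ 2 - 1) / 4 *
          ∫ t in (0:ℝ)..R, Real.sin (Real.pi * t / R) ^ 2 / Real.sinh t ^ 2 := by
    have i1 : IntervalIntegrable (fun t => (Real.pi / R) ^ 2 * Real.cos (Real.pi * t / R) ^ 2)
        MeasureTheory.volume 0 R := Continuous.intervalIntegrable (by fun_prop) _ _
    have i2 : IntervalIntegrable (fun t => ((n : ℝ) - 1) ^ 2 / 4 * Real.sin (Real.pi * t / R) ^ 2)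
        MeasureTheory.volume 0 R := Continuous.intervalIntegrable (by fun_prop) _ _
    have i3 := (aux_int R hR).const_mul (((n : ℝ) ^ 2 - 1) / 4)
    rw [← hsin]
    nth_rewrite 1 [hsin]
    rw [← hcos, ← intervalIntegral.integral_const_mul, ← intervalIntegral.integral_const_mul,
      ← intervalIntegral.integral_const_mul, ← intervalIntegral.integral_add i1 i2,
      ← intervalIntegral.integral_add (i1.add i2) i3]
    apply intervalIntegral.integral_congr
    intro t _
    simp only [hder, V2]
    ring
  unfold Rayleigh
  rw [hnum, hsin, div_le_iff₀ (by positivity)]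
  have h5 : ((n : ℝ) ^ 2 - 1) / 4 *
          ∫ t in (0:ℝ)..R, Real.sin (Real.pi * t / R) ^ 2 / Real.sinh t ^ 2 ≤
      ((n : ℝ) ^ 2 - 1) / 4 * (2 * Real.pi ^ 3 / R ^ 2) := by gcongr
  have h6 : ((n : ℝ) ^ 2 - 1) * Real.pi ^ 3 / R ^ 3 * (R / 2) =
      ((n : ℝ) ^ 2 - 1) / 4 * (2 * Real.pi ^ 3 / R ^ 2) := by
    field_simp
    ring
  linarith

/-- For every `n ≥ 2` there is `C = C(n) > 0` such that for every `R > 0`: if `λ₁` is the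
smallest Dirichlet eigenvalue of `-d²/dt² + V₁` on `[0, R]` (it is an eigenvalue and every
eigenvalue is `≥ λ₁`), then the Rayleigh quotient of `v(t) = sin(πt/R)` for `V₂` is at most
`λ₁ + C/R³`.  This is the fundamental gap estimate `λ₂(B_R) − λ₁(B_R) ≤ C(n)/R³` for
geodesic balls `B_R ⊂ ℍⁿ`, so `(λ₂ − λ₁)R² → 0` as `R → ∞`. -/
theorem fundamental_gap_ball_upper_bound (n : ℕ) (hn : 2 ≤ n) :
    ∃ C : ℝ, 0 < C ∧ ∀ R : ℝ, 0 < R → ∀ lam1 : ℝ,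
      IsDirichletEigenvalue (V1 n) R lam1 →
      (∀ μ : ℝ, IsDirichletEigenvalue (V1 n) R μ → lam1 ≤ μ) →
      Rayleigh (V2 n) (fun t => Real.sin (Real.pi * t / R)) R ≤ lam1 + C / R ^ 3 := by
  have hn' : (2 : ℝ) ≤ n := by exact_mod_cast hn
  have hpos : 0 < ((n : ℝ) ^ 2 - 1) * Real.pi ^ 3 :=
    mul_pos (by nlinarith) (by have := Real.pi_pos; positivity)
  refine ⟨((n : ℝ) ^ 2 - 1) * Real.pi ^ 3, hpos, ?_⟩
  intro R hR lam1 hlam _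
  rcases eq_or_lt_of_le hn with h | h
  · subst h
    exact absurd hlam (aux_two R lam1 hR)
  · have hn3 : (3 : ℝ) ≤ n := by exact_mod_cast h
    have hlow := aux_picone (V1 n) R lam1 (((n : ℝ) - 1) ^ 2 / 4) hR (by
      intro t ht
      have : 0 ≤ ((n : ℝ) - 1) / 4 * (((n : ℝ) - 3) / Real.sinh t ^ 2) :=
        mul_nonneg (by linarith) (div_nonneg (by linarith) (sq_nonneg _))
      simp only [V1]
      nlinarith) hlam
    have := aux_rayleigh n hn R hR
    linarith
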